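/- Suppose I satisfies (I1)–(I8). Then c_M = c_N := inf_{u ∈ N} J(u), where N := {u ∈ M \ X̃ : J'(u)[u] = 0}, and N is bounded away from X̃, i.e. inf{‖u⁺‖ : u ∈ N} > 0 (hence N is closed in X). -/

import Mathlib

/-!
Write `h(v) = J (m v)` for the reduced functional on `H`; since `m v` minimizes `I` over the fibre
above `v`, it maximizes `J` there.

* The map `m` is continuous (`continuous_reduction`). This uses reflexivity of `W` in the form of
  weak sequential compactness (`exists_weakly_tendsto_subseq`).
* By (I8) a point `u` of `N` maximizes `J` on `{t u + w : t ≥ 0, w ∈ W}`. Comparing with the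
  sphere of radius `r` gives `a ≤ J u ≤ ‖u⁺‖² / 2` on `N`, so `N` stays away from `W`, and it is
  closed because its defining equations are.
* For `u ∈ N`, lifting a long segment in the direction `u⁺` by `m` gives an admissible path, by
  (I7), on which `J ≤ J u`. Hence `c_M ≤ c_N`.
* Conversely every admissible path meets `N`, so `c_N ≤ c_M`. The key point is that `h` has no
  valley along a ray: at an interior minimum the radial derivative `J'(u)[u]` vanishes
  (`radial_fderiv_eq_zero_of_localMin`), so the point lies in `N` and is a global maximum of the
  ray. It follows that, off the origin, `J'(u)[u] ≥ 0` on `M` near `0`, while `J'(u)[u] < 0` at the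
  end of the path. At the last time when `J'(u)[u] ≥ 0` along the path one has equality, and the
  path is not at the origin then, so it is in `N`. The existence of such a path also shows that
  `N` is nonempty.
-/

open MeasureTheory Filter Real Set
open scoped RealInnerProductSpace ENNReal Topology

noncomputable section


/-! ### Weak sequential compactness -/

/-- A bounded sequence in a reflexive Banach space has a weakly convergent subsequence.
The weak closure `K` of the range is weakly compact by Banach–Alaoglu and lies in a norm-separable
closed subspace, so countably many functionals separate the points of `K`;
hence `K` is metrizable and therefore sequentially compact. -/
lemma exists_weakly_tendsto_subseq {W : Type*} [NormedAddCommGroup W] [NormedSpace ℝ W]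
    (hrefl : Function.Surjective ⇑(NormedSpace.inclusionInDoubleDual ℝ W))
    (w : ℕ → W) {C : ℝ} (hC : ∀ n, ‖w n‖ ≤ C) :
    ∃ w₀ : W, ∃ φ : ℕ → ℕ, StrictMono φ ∧
      ∀ f : W →L[ℝ] ℝ, Tendsto (fun n => f (w (φ n))) atTop (𝓝 (f w₀)) := by
  set S : Set (WeakSpace ℝ W) := toWeakSpace ℝ W '' range w with hS
  have hK : IsCompact (closure S) := by
    apply NormedSpace.isCompact_closure_of_isBounded
    · rw [hS, preimage_image_eq _ (toWeakSpace ℝ W).injective]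
      refine isBounded_iff_forall_norm_le.2 ⟨C, ?_⟩
      rintro _ ⟨n, rfl⟩
      exact hC n
    · intro x _
      obtain ⟨y, hy⟩ := hrefl (WeakDual.toStrongDual x)
      refine ⟨toWeakSpace ℝ W y, ?_⟩
      refine DFunLike.ext _ _ fun f => ?_
      exact DFunLike.congr_fun hy f
  set E : Submodule ℝ W := (Submodule.span ℝ (range w)) with hE
  have hKE : ∀ x ∈ closure S, (toWeakSpace ℝ W).symm x ∈ closure (E : Set W) := by
    intro x hx
    have h1 : closure S ⊆ closure (toWeakSpace ℝ W '' (E : Set W)) :=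
      closure_mono (image_mono Submodule.subset_span)
    rw [← Convex.toWeakSpace_closure (𝕜 := ℝ) E.convex] at h1
    obtain ⟨y, hy, rfl⟩ := h1 hx
    simpa using hy
  have hsep : TopologicalSpace.IsSeparable (closure (E : Set W)) :=
    ((countable_range w).isSeparable.span (R := ℝ)).closure
  obtain ⟨c, hc, hcd⟩ := hsep
  obtain ⟨d, hd⟩ : ∃ d : ℕ → W, c ⊆ range d :=
    countable_iff_exists_subset_range.1 hc
  choose f hf1 hf2 using fun n => exists_dual_vector'' ℝ (d n)
  have hfsep : ∀ x ∈ closure (E : Set W), (∀ n, f n x = 0) → x = 0 := by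
    intro x hx h0
    have hxc : x ∈ closure c := by
      have := hcd hx
      simpa using this
    rw [← norm_le_zero_iff]
    refine le_of_forall_pos_le_add fun ε hε => ?_
    obtain ⟨y, hy, hxy⟩ := Metric.mem_closure_iff.1 hxc (ε / 2) (by positivity)
    obtain ⟨n, rfl⟩ := hd hy
    rw [dist_eq_norm] at hxy
    have h3 : ‖d n‖ ≤ ‖x - d n‖ := by
      have h4 : f n (d n - x) = ‖d n‖ := by
        rw [map_sub, h0 n, hf2 n]; simp
      calc ‖d n‖ = f n (d n - x) := h4.symm
        _ ≤ ‖f n (d n - x)‖ := le_abs_self _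
        _ ≤ 1 * ‖d n - x‖ := (f n).le_of_opNorm_le (hf1 n) _
        _ = ‖x - d n‖ := by rw [one_mul, norm_sub_rev]
    have h5 : ‖x‖ ≤ ‖x - d n‖ + ‖d n‖ := norm_le_norm_sub_add _ _
    linarith
  have hev : ∀ g : W →L[ℝ] ℝ,
      Continuous fun x : WeakSpace ℝ W => g ((toWeakSpace ℝ W).symm x) := fun g =>
    WeakBilin.eval_continuous (topDualPairing ℝ W).flip g
  have : CompactSpace (closure S) := isCompact_iff_compactSpace.1 hK
  have : TopologicalSpace.MetrizableSpace (closure S) := by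
    refine Metric.PiNatEmbed.TopologicalSpace.MetrizableSpace.of_countable_separating
      (fun n k => f n ((toWeakSpace ℝ W).symm k.1))
      (fun n => (hev (f n)).comp continuous_subtype_val) fun x y hxy => ?_
    contrapose! hxy
    have hcl : (toWeakSpace ℝ W).symm x.1 - (toWeakSpace ℝ W).symm y.1 ∈ closure (E : Set W) :=
      E.topologicalClosure.sub_mem (hKE _ x.2) (hKE _ y.2)
    have := hfsep _ hcl fun n => by rw [map_sub, hxy n, sub_self]
    exact Subtype.ext ((toWeakSpace ℝ W).symm.injective (sub_eq_zero.1 this))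
  obtain ⟨x, φ, hφ, hx⟩ := SeqCompactSpace.tendsto_subseq
    (fun n => (⟨toWeakSpace ℝ W (w n), subset_closure ⟨_, ⟨n, rfl⟩, rfl⟩⟩ : closure S))
  refine ⟨(toWeakSpace ℝ W).symm x.1, φ, hφ, fun g => ?_⟩
  have := (((hev g).comp continuous_subtype_val).tendsto x).comp hx
  simpa [Function.comp_def] using this

/-! ### Calculus along rays -/

/-- If `s ↦ J (w s)` has a local minimum at `1` and `J (s⁻¹ • w s) ≤ J (w 1)` for `s` near `1`,
then the radial derivative of `J` at `w 1` vanishes.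
The curve `w` is only assumed continuous: `J (w s) - J (s⁻¹ • w s)` is nonnegative, vanishes
at `s = 1`, and is differentiable there because `J` is strictly differentiable. -/
lemma radial_fderiv_eq_zero_of_localMin {E : Type*} [NormedAddCommGroup E] [NormedSpace ℝ E]
    {J : E → ℝ} (hJ : ContDiff ℝ 1 J) {w : ℝ → E} (hw : ContinuousAt w 1)
    (hup : ∀ᶠ s in 𝓝 (1 : ℝ), J (s⁻¹ • w s) ≤ J (w 1))
    (hmin : ∀ᶠ s in 𝓝 (1 : ℝ), J (w 1) ≤ J (w s)) :
    fderiv ℝ J (w 1) (w 1) = 0 := by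
  set L := fderiv ℝ J (w 1) with hL
  have hstrict : HasStrictFDerivAt J L (w 1) :=
    (hJ.contDiffAt).hasStrictFDerivAt one_ne_zero
  have hinv : ContinuousAt (fun s : ℝ => s⁻¹) 1 := continuousAt_inv₀ one_ne_zero
  have ht : Tendsto (fun s => (w s, s⁻¹ • w s)) (𝓝 1) (𝓝 (w 1, w 1)) := by
    have := hw.tendsto.prodMk_nhds (hinv.smul hw).tendsto
    simpa using this
  have ho := hstrict.isLittleO.comp_tendsto ht
  have hder : HasDerivAt (fun s : ℝ => 1 - s⁻¹) 1 1 := by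
    have := (hasDerivAt_inv (one_ne_zero : (1 : ℝ) ≠ 0)).const_sub 1
    simpa using this
  have hbig : (fun s : ℝ => w s - s⁻¹ • w s) =O[𝓝 1] fun s => s - 1 := by
    have h1 : (fun s : ℝ => 1 - s⁻¹) =O[𝓝 1] fun s => s - 1 := by
      simpa using hder.isBigO_sub
    have h2 : w =O[𝓝 1] fun _ => (1 : ℝ) := hw.tendsto.isBigO_one ℝ
    have := h1.smul h2
    simpa [sub_smul] using this
  have hq : HasDerivAt (fun s => J (w s) - J (s⁻¹ • w s)) (L (w 1)) 1 := by
    rw [hasDerivAt_iff_isLittleO]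
    have h1 := ho.trans_isBigO hbig
    have h2 : (fun s : ℝ => (1 - s⁻¹) * L (w s) - (s - 1) * L (w 1)) =o[𝓝 1]
        fun s => s - 1 := by
      have h3 : (fun s : ℝ => (1 - s⁻¹ - (s - 1)) * L (w s)) =o[𝓝 1] fun s => s - 1 := by
        have h4 := (hasDerivAt_iff_isLittleO.1 hder)
        have h5 : (fun s => L (w s)) =O[𝓝 1] fun _ => (1 : ℝ) :=
          (L.continuous.continuousAt.comp hw).tendsto.isBigO_one ℝ
        have := h4.mul_isBigO h5
        simpa using this
      have h6 : (fun s : ℝ => (s - 1) * (L (w s) - L (w 1))) =o[𝓝 1] fun s => s - 1 := by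
        have h7 : (fun s => L (w s) - L (w 1)) =o[𝓝 1] fun _ => (1 : ℝ) := by
          rw [Asymptotics.isLittleO_one_iff]
          have := (L.continuous.continuousAt.comp hw).tendsto.sub_const (L (w 1))
          simpa using this
        have := (Asymptotics.isBigO_refl (fun s : ℝ => s - 1) (𝓝 1)).mul_isLittleO h7
        simpa using this
      refine (h3.add h6).congr_left fun s => ?_
      ring
    refine (h1.add h2).congr_left fun s => ?_
    simp only [Function.comp, map_sub, map_smul, smul_eq_mul, inv_one, one_smul]
    ring
  have hloc : IsLocalMin (fun s => J (w s) - J (s⁻¹ • w s)) 1 := by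
    filter_upwards [hup, hmin] with s h1 h2
    simp only [inv_one, one_smul, sub_self]
    linarith
  exact hloc.hasDerivAt_eq_zero hq

lemma hasDerivAt_ray {E : Type*} [NormedAddCommGroup E] [NormedSpace ℝ E]
    {J : E → ℝ} (hJ : ContDiff ℝ 1 J) (u : E) :
    HasDerivAt (fun s : ℝ => J (s • u)) (fderiv ℝ J u u) 1 := by
  have h1 : HasFDerivAt J (fderiv ℝ J u) ((1 : ℝ) • u) := by
    rw [one_smul]; exact (hJ.differentiable one_ne_zero u).hasFDerivAt
  have h2 : HasDerivAt (fun s : ℝ => s • u) u 1 := by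
    simpa using (hasDerivAt_id (1 : ℝ)).smul_const u
  exact h1.comp_hasDerivAt (1 : ℝ) h2

lemma exists_gt_one_of_radial_pos {E : Type*} [NormedAddCommGroup E] [NormedSpace ℝ E]
    {J : E → ℝ} (hJ : ContDiff ℝ 1 J) {u : E} (h : 0 < fderiv ℝ J u u) :
    ∃ t : ℝ, 1 < t ∧ J u < J (t • u) := by
  have h1 := (hasDerivAt_iff_tendsto_slope.1 (hasDerivAt_ray hJ u)).eventually (lt_mem_nhds h)
  have h2 : ∀ᶠ t in 𝓝[>] (1 : ℝ), 0 < slope (fun s : ℝ => J (s • u)) 1 t :=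
    h1.filter_mono (nhdsWithin_mono _ fun x hx => ne_of_gt hx)
  obtain ⟨t, ht, ht1⟩ := (h2.and self_mem_nhdsWithin).exists
  refine ⟨t, ht1, ?_⟩
  have ht1' : (1 : ℝ) < t := ht1
  rw [slope_def_field, one_smul] at ht
  have := (div_pos_iff_of_pos_right (sub_pos.2 ht1')).1 ht
  linarith

lemma exists_lt_one_of_radial_neg {E : Type*} [NormedAddCommGroup E] [NormedSpace ℝ E]
    {J : E → ℝ} (hJ : ContDiff ℝ 1 J) {u : E} (h : fderiv ℝ J u u < 0) :
    ∃ t : ℝ, 0 < t ∧ t < 1 ∧ J u < J (t • u) := by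
  have h1 := (hasDerivAt_iff_tendsto_slope.1 (hasDerivAt_ray hJ u)).eventually (gt_mem_nhds h)
  have h2 : ∀ᶠ t in 𝓝[<] (1 : ℝ), slope (fun s : ℝ => J (s • u)) 1 t < 0 :=
    h1.filter_mono (nhdsWithin_mono _ fun x hx => ne_of_lt hx)
  have h3 : ∀ᶠ t in 𝓝[<] (1 : ℝ), 0 < t := nhdsWithin_le_nhds (lt_mem_nhds one_pos)
  obtain ⟨t, ⟨ht, ht0⟩, ht1⟩ := ((h2.and h3).and self_mem_nhdsWithin).exists
  refine ⟨t, ht0, ht1, ?_⟩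
  have ht1' : t < (1 : ℝ) := ht1
  rw [slope_def_field, one_smul] at ht
  have := (div_lt_iff_of_neg (sub_neg.2 ht1')).1 ht
  linarith

/-! ### The reduction map -/

/-- The fibrewise minimizer depends continuously on the base point. Along `vₙ → v`, coercivity
bounds `m (vₙ)`, so a subsequence converges weakly in the fibre direction; lower semicontinuity
and minimality identify the limit as `m v` and force convergence of the values of `I`,
which upgrades weak to norm convergence. -/
lemma continuous_reduction {H W : Type*} [NormedAddCommGroup H]
    [NormedAddCommGroup W] [NormedSpace ℝ W]
    (hrefl : Function.Surjective ⇑(NormedSpace.inclusionInDoubleDual ℝ W))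
    {I : H × W → ℝ} (hIc : Continuous I) (hI0 : ∀ u, 0 ≤ I u)
    (hI2 : ∀ (u : ℕ → H × W) (u₀ : H × W),
      Tendsto (fun n => (u n).1) atTop (𝓝 u₀.1) →
      (∀ f : W →L[ℝ] ℝ, Tendsto (fun n => f (u n).2) atTop (𝓝 (f u₀.2))) →
      I u₀ ≤ liminf (fun n => I (u n)) atTop)
    (hI3 : ∀ (u : ℕ → H × W) (u₀ : H × W),
      Tendsto (fun n => (u n).1) atTop (𝓝 u₀.1) →
      (∀ f : W →L[ℝ] ℝ, Tendsto (fun n => f (u n).2) atTop (𝓝 (f u₀.2))) →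
      Tendsto (fun n => I (u n)) atTop (𝓝 (I u₀)) →
      Tendsto u atTop (𝓝 u₀))
    (hI4 : ∀ u : ℕ → H × W,
      Tendsto (fun n => Real.sqrt (‖(u n).1‖ ^ 2 + ‖(u n).2‖ ^ 2)) atTop atTop →
      Tendsto (fun n => ‖(u n).1‖ + I (u n)) atTop atTop)
    {m : H → H × W} (hm1 : ∀ v, (m v).1 = v)
    (hmin : ∀ v w, w ≠ (m v).2 → I (m v) < I (v, w)) : Continuous m := by
  have hle : ∀ v w, I (m v) ≤ I (v, w) := by
    intro v w
    by_cases h : w = (m v).2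
    · exact le_of_eq (congrArg I (Prod.ext (hm1 v) h.symm))
    · exact (hmin v w h).le
  rw [continuous_iff_seqContinuous]
  intro x v hx
  refine tendsto_of_subseq_tendsto fun ns hns => ?_
  set y : ℕ → H := fun n => x (ns n) with hy
  have hyv : Tendsto y atTop (𝓝 v) := hx.comp hns
  obtain ⟨B, hB⟩ : ∃ B, ∀ n, ‖y n‖ + I (m (y n)) ≤ B := by
    have h1 : Tendsto (fun n => ‖y n‖ + I (y n, 0)) atTop (𝓝 (‖v‖ + I (v, 0))) :=
      hyv.norm.add ((hIc.tendsto (v, 0)).comp (hyv.prodMk_nhds tendsto_const_nhds))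
    obtain ⟨B, hB⟩ := h1.bddAbove_range
    refine ⟨B, fun n => le_trans ?_ (hB ⟨n, rfl⟩)⟩
    have := hle (y n) 0
    simpa using this
  obtain ⟨C, hC⟩ : ∃ C, ∀ n, ‖(m (y n)).2‖ ≤ C := by
    by_contra! hcon
    choose k hk using fun n : ℕ => hcon n
    have h1 := hI4 (fun n => m (y (k n))) <| by
      refine tendsto_atTop_mono (fun n => ?_) tendsto_natCast_atTop_atTop
      refine (hk n).le.trans (Real.le_sqrt_of_sq_le ?_)
      have := sq_nonneg ‖(m (y (k n))).1‖
      linarith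
    obtain ⟨n, hn⟩ := (h1.eventually (eventually_gt_atTop B)).exists
    have := hB (k n)
    rw [hm1] at hn
    linarith
  obtain ⟨w₀, φ, hφ, hw⟩ := exists_weakly_tendsto_subseq hrefl (fun n => (m (y n)).2) hC
  have hyφ : Tendsto (fun n => y (φ n)) atTop (𝓝 v) := hyv.comp hφ.tendsto_atTop
  have hfst : Tendsto (fun n => (m (y (φ n))).1) atTop (𝓝 v) := by
    simpa only [hm1] using hyφ
  have hub : Tendsto (fun n => I (y (φ n), (m v).2)) atTop (𝓝 (I (m v))) := by
    have h1 : (v, (m v).2) = m v := Prod.ext (hm1 v).symm rfl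
    have h2 := (hIc.tendsto (v, (m v).2)).comp (hyφ.prodMk_nhds tendsto_const_nhds)
    rwa [h1] at h2
  have hlim := hI2 (fun n => m (y (φ n))) (v, w₀) hfst hw
  have hbdd : IsBoundedUnder (· ≤ ·) atTop fun n => I (m (y (φ n))) :=
    hub.isBoundedUnder_le.mono_le (Eventually.of_forall fun n => hle _ _)
  have hbdd' : IsBoundedUnder (· ≥ ·) atTop fun n => I (m (y (φ n))) :=
    ⟨0, eventually_map.2 (Eventually.of_forall fun n => hI0 _)⟩
  have hlimsup : limsup (fun n => I (m (y (φ n)))) atTop ≤ I (m v) := by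
    rw [← hub.limsup_eq]
    exact limsup_le_limsup (Eventually.of_forall fun n => hle _ _)
      hbdd'.isCoboundedUnder_le hub.isBoundedUnder_le
  have hw₀ : w₀ = (m v).2 := by
    by_contra hne
    have h1 := hmin v w₀ hne
    have h2 := liminf_le_limsup hbdd hbdd'
    linarith
  have hmv : (v, w₀) = m v := Prod.ext (hm1 v).symm hw₀
  rw [hmv] at hlim
  refine ⟨φ, hI3 _ (m v) (by rwa [hm1 v]) (by rwa [← hw₀]) ?_⟩
  exact tendsto_of_le_liminf_of_limsup_le hlim hlimsup hbdd hbdd'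

/-! ### The Nehari–Pankov set and the mountain pass level -/

/-- Theorem `ThLink1 (b)`: under (I1)–(I8), the mountain-pass level `c_M` coincides
with the ground state level `c_N = inf_N J` on the Nehari–Pankov set
`N = {u ∈ M \ X̃ : J'(u)[u] = 0}`, and `N` is bounded away from `X̃`
(hence closed in `X`).  The space `X = X⁺ ⊕ X̃` with `‖u‖² = ‖u⁺‖² + ‖ũ‖²` is
modelled as the product `H × W` of the Hilbert space `H = X⁺` and the reflexive
Banach space `W = X̃`. -/
theorem cM_eq_cN_nehari_pankov
    {H W : Type*} [NormedAddCommGroup H] [InnerProductSpace ℝ H] [CompleteSpace H]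
    [NormedAddCommGroup W] [NormedSpace ℝ W] [CompleteSpace W]
    -- `W` is reflexive
    (hrefl : Function.Surjective ⇑(NormedSpace.inclusionInDoubleDual ℝ W))
    (I : H × W → ℝ) (hI : ContDiff ℝ 1 I)
    (J : H × W → ℝ) (hJ : ∀ u, J u = (1/2) * ‖u.1‖ ^ 2 - I u)
    (nrm : H × W → ℝ) (hnrm : ∀ u, nrm u = Real.sqrt (‖u.1‖ ^ 2 + ‖u.2‖ ^ 2))
    (Mset : Set (H × W)) (hMset : Mset = {u | ∀ w : W, fderiv ℝ I u (0, w) = 0})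
    -- (I1)
    (hI1 : I 0 = 0 ∧ ∀ u, 0 ≤ I u)
    -- (I2): 𝒯-sequential lower semicontinuity
    (hI2 : ∀ (u : ℕ → H × W) (u₀ : H × W),
      Tendsto (fun n => (u n).1) atTop (𝓝 u₀.1) →
      (∀ f : W →L[ℝ] ℝ, Tendsto (fun n => f (u n).2) atTop (𝓝 (f u₀.2))) →
      I u₀ ≤ liminf (fun n => I (u n)) atTop)
    -- (I3)
    (hI3 : ∀ (u : ℕ → H × W) (u₀ : H × W),
      Tendsto (fun n => (u n).1) atTop (𝓝 u₀.1) →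
      (∀ f : W →L[ℝ] ℝ, Tendsto (fun n => f (u n).2) atTop (𝓝 (f u₀.2))) →
      Tendsto (fun n => I (u n)) atTop (𝓝 (I u₀)) →
      Tendsto u atTop (𝓝 u₀))
    -- (I4): `‖u⁺‖ + I(u) → ∞` as `‖u‖ → ∞`
    (hI4 : ∀ u : ℕ → H × W, Tendsto (fun n => nrm (u n)) atTop atTop →
      Tendsto (fun n => ‖(u n).1‖ + I (u n)) atTop atTop)
    -- (I5)
    (hI5 : ∀ u ∈ Mset, ∀ w : W, w ≠ 0 → I u < I (u.1, u.2 + w))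
    (r a : ℝ) (hr : 0 < r)
    -- (I6)
    (ha : a = sInf {y | ∃ v : H, ‖v‖ = r ∧ y = J (v, 0)}) (hI6 : 0 < a)
    -- (I7)
    (hI7 : ∀ (t : ℕ → ℝ) (u : ℕ → H × W) (v : H), Tendsto t atTop atTop →
      Tendsto (fun n => (u n).1) atTop (𝓝 v) → v ≠ 0 →
      Tendsto (fun n => I (t n • u n) / (t n) ^ 2) atTop atTop)
    -- the Nehari–Pankov set `N = {u ∈ M \ X̃ : J'(u)[u] = 0}`
    (Nset : Set (H × W))
    (hNset : Nset = {u | u ∈ Mset ∧ u.1 ≠ 0 ∧ fderiv ℝ J u u = 0})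
    -- (I8)
    (hI8 : ∀ u ∈ Nset, ∀ t : ℝ, 0 ≤ t → ∀ v : W,
      ((t ^ 2 - 1) / 2) * fderiv ℝ I u u + t * fderiv ℝ I u (0, v) + I u
        - I (t • u + (0, v)) ≤ 0)
    -- the reduction map `m : X⁺ → M`, `m(v)` being the unique point of `M` over `v`
    (m : H → H × W)
    (hm : ∀ v : H, (m v).1 = v ∧ m v ∈ Mset ∧ ∀ u ∈ Mset, u.1 = v → u = m v)
    -- the mountain-pass level over paths in `M`
    (cM : ℝ)
    (hcM : cM = sInf {c | ∃ γ : ℝ → H × W, ContinuousOn γ (Icc 0 1) ∧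
      (∀ s ∈ Icc (0:ℝ) 1, γ s ∈ Mset) ∧ γ 0 = 0 ∧ r < ‖(γ 1).1‖ ∧ J (γ 1) < 0 ∧
      c = sSup (J '' (γ '' Icc (0:ℝ) 1))}) :
    cM = sInf (J '' Nset) ∧
    (∃ δ > 0, ∀ u ∈ Nset, δ ≤ ‖u.1‖) ∧
    IsClosed Nset := by
  obtain ⟨hI00, hI0⟩ := hI1
  have hm1 : ∀ v, (m v).1 = v := fun v => (hm v).1
  have hmM : ∀ v, m v ∈ Mset := fun v => (hm v).2.1
  have hmu : ∀ u ∈ Mset, u = m u.1 := fun u hu => (hm u.1).2.2 u hu rfl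
  have hIc : Continuous I := hI.continuous
  have hmin : ∀ v w, w ≠ (m v).2 → I (m v) < I (v, w) := by
    intro v w hw
    have := hI5 (m v) (hmM v) (w - (m v).2) (sub_ne_zero.2 hw)
    rwa [hm1, add_sub_cancel] at this
  have hmc : Continuous m :=
    continuous_reduction hrefl hIc hI0 hI2 hI3 (by simpa only [hnrm] using hI4) hm1 hmin
  have hJfun : J = fun u => (1/2) * ‖u.1‖ ^ 2 - I u := funext hJ
  have hJC : ContDiff ℝ 1 J := by
    rw [hJfun]
    exact (contDiff_const.mul (contDiff_fst.norm_sq ℝ)).sub hI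
  have hJc : Continuous J := hJC.continuous
  have hradial : ∀ u, fderiv ℝ J u u = ‖u.1‖ ^ 2 - fderiv ℝ I u u := by
    intro u
    have h1 : HasFDerivAt I (fderiv ℝ I u) u := (hI.differentiable one_ne_zero u).hasFDerivAt
    have h2 : HasFDerivAt (fun u : H × W => ‖u.1‖ ^ 2) _ u :=
      (hasFDerivAt_fst (𝕜 := ℝ) (p := u)).norm_sq
    have h3 := (h2.const_mul (1/2 : ℝ)).fun_sub h1
    rw [← hJfun] at h3
    rw [h3.fderiv]
    simp
  have hφc : Continuous fun u => fderiv ℝ J u u :=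
    (hJC.continuous_fderiv one_ne_zero).clm_apply continuous_id
  have hN : ∀ u, u ∈ Nset ↔ u ∈ Mset ∧ u.1 ≠ 0 ∧ fderiv ℝ J u u = 0 := by
    intro u; rw [hNset]; rfl
  have hJle : ∀ u, J u ≤ 1/2 * ‖u.1‖ ^ 2 := by
    intro u; have := hI0 u; rw [hJ]; linarith
  -- `m v` maximizes `J` on the fibre over `v`
  have hfib : ∀ u, J u ≤ J (m u.1) := by
    intro u
    by_cases h : u.2 = (m u.1).2
    · exact le_of_eq (congrArg J (Prod.ext (hm1 _).symm h))
    · have := hmin u.1 u.2 h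
      rw [hJ, hJ, hm1]
      change I _ < I u at this
      linarith
  have hm0 : m 0 = 0 := by
    have h0 : (0 : H × W) ∈ Mset := by
      rw [hMset]
      intro w
      have hloc : IsLocalMin I 0 := Eventually.of_forall fun u => by rw [hI00]; exact hI0 u
      rw [hloc.fderiv_eq_zero]; rfl
    exact (hmu 0 h0).symm
  -- a point of `N` maximizes `J` over the half-space spanned by its ray and `W`
  have hmax : ∀ u ∈ Nset, ∀ t : ℝ, 0 ≤ t → J (m (t • u.1)) ≤ J u := by
    intro u hu t ht
    obtain ⟨huM, -, hu0⟩ := (hN u).1 hu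
    set v := (m (t • u.1)).2 - t • u.2 with hv
    have h1 : t • u + (0, v) = m (t • u.1) := by
      refine Prod.ext ?_ ?_
      · simp [hm1]
      · simp [hv]
    have h2 := hI8 u hu t ht v
    rw [h1] at h2
    have h3 : fderiv ℝ I u (0, v) = 0 := by rw [hMset] at huM; exact huM v
    have h4 : fderiv ℝ I u u = ‖u.1‖ ^ 2 := by have := hradial u; linarith
    rw [h3, h4] at h2
    rw [hJ, hJ, hm1, norm_smul, mul_pow, Real.norm_eq_abs, sq_abs]
    linarith
  have hsph : ∀ v : H, ‖v‖ = r → a ≤ J (m v) := by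
    intro v hv
    refine le_trans ?_ (hfib (v, 0))
    have hbdd : BddBelow {y | ∃ v : H, ‖v‖ = r ∧ y = J (v, 0)} := by
      -- an unbounded set would have `sInf = 0`
      by_contra hcon
      rw [Real.sInf_of_not_bddBelow hcon] at ha
      linarith
    rw [ha]
    exact csInf_le hbdd ⟨v, hv, rfl⟩
  obtain ⟨e, he⟩ : ∃ e : H, ‖e‖ = r := by
    by_contra! hcon
    have : {y | ∃ v : H, ‖v‖ = r ∧ y = J (v, 0)} = ∅ := by
      ext y; simp [hcon]
    rw [this, Real.sInf_empty] at ha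
    linarith
  have hnormalize : ∀ v : H, v ≠ 0 → ‖(r / ‖v‖) • v‖ = r := by
    intro v hv
    rw [norm_smul, norm_div, norm_norm, div_mul_cancel₀ _ (norm_ne_zero_iff.2 hv),
      Real.norm_of_nonneg hr.le]
  have hNa : ∀ u ∈ Nset, a ≤ J u := by
    intro u hu
    have hu1 := ((hN u).1 hu).2.1
    exact (hsph _ (hnormalize u.1 hu1)).trans (hmax u hu _ (by positivity))
  -- along a ray the reduced functional has no valley: an interior minimum would be a point of
  -- `N`, hence a global maximum on the ray
  have hvalley : ∀ v : H, v ≠ 0 → ∀ t₁ t₂ : ℝ, 0 < t₁ → t₁ < 1 → 1 < t₂ →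
      J (m v) < J (m (t₁ • v)) → J (m v) < J (m (t₂ • v)) → False := by
    intro v hv t₁ t₂ ht0 ht1 ht2 h1 h2
    have hc : Continuous fun s : ℝ => J (m (s • v)) := by fun_prop
    obtain ⟨s, hs, hsmin⟩ := isCompact_Icc.exists_isMinOn
      (nonempty_Icc.2 (ht1.le.trans ht2.le)) hc.continuousOn
    have hs1 : J (m (s • v)) ≤ J (m v) := by
      have := hsmin (show (1 : ℝ) ∈ Icc t₁ t₂ from ⟨ht1.le, ht2.le⟩)
      simpa using this
    have hst1 : t₁ < s := lt_of_le_of_ne hs.1 (by rintro rfl; linarith)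
    have hst2 : s < t₂ := lt_of_le_of_ne hs.2 (by rintro rfl; linarith)
    have hs0 : 0 < s := ht0.trans hst1
    have hsN : m (s • v) ∈ Nset := by
      refine (hN _).2 ⟨hmM _, ?_, ?_⟩
      · rw [hm1]; exact smul_ne_zero hs0.ne' hv
      · have hwc : Continuous fun σ : ℝ => m ((σ * s) • v) := by fun_prop
        have := radial_fderiv_eq_zero_of_localMin hJC hwc.continuousAt ?_ ?_
        · simpa using this
        · filter_upwards [lt_mem_nhds (one_pos : (0 : ℝ) < 1)] with σ hσ
          refine (hfib _).trans (le_of_eq ?_)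
          rw [Prod.smul_fst, hm1, smul_smul, one_mul, inv_mul_cancel_left₀ hσ.ne']
        · have h3 : Tendsto (fun σ : ℝ => σ * s) (𝓝 1) (𝓝 s) := by
            have : Continuous fun σ : ℝ => σ * s := by fun_prop
            simpa using this.tendsto 1
          filter_upwards [h3.eventually (Icc_mem_nhds hst1 hst2)] with σ hσ
          simpa using hsmin hσ
    have h3 := hmax _ hsN (t₁ / s) (by positivity)
    rw [hm1, smul_smul, div_mul_cancel₀ _ hs0.ne'] at h3
    linarith
  have hNδ : ∀ u ∈ Nset, Real.sqrt (2 * a) ≤ ‖u.1‖ := by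
    intro u hu
    rw [Real.sqrt_le_left (norm_nonneg _)]
    have := hNa u hu
    have := hJle u
    linarith
  have hδ : 0 < Real.sqrt (2 * a) := Real.sqrt_pos.2 (by linarith)
  -- near the origin the radial derivative of `J` on `M` is nonnegative
  have hneg : ∀ v : H, v ≠ 0 → ‖v‖ < r → 1/2 * ‖v‖ ^ 2 < a → 0 ≤ fderiv ℝ J (m v) (m v) := by
    intro v hv hvr hva
    by_contra! hlt
    obtain ⟨t, ht0, ht1, ht⟩ := exists_lt_one_of_radial_neg hJC hlt
    have hvpos : 0 < ‖v‖ := norm_pos_iff.2 hv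
    refine hvalley v hv t (r / ‖v‖) ht0 ht1 ((one_lt_div hvpos).2 hvr) ?_ ?_
    · have := hfib (t • m v)
      rw [Prod.smul_fst, hm1] at this
      linarith
    · have h1 := hJle (m v)
      rw [hm1] at h1
      have := hsph _ (hnormalize v hv)
      linarith
  -- every admissible path meets `N`
  have hcross : ∀ γ : ℝ → H × W, ContinuousOn γ (Icc 0 1) →
      (∀ s ∈ Icc (0:ℝ) 1, γ s ∈ Mset) → γ 0 = 0 → r < ‖(γ 1).1‖ → J (γ 1) < 0 →
      ∃ s ∈ Icc (0:ℝ) 1, γ s ∈ Nset := by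
    intro γ hγ hγM hγ0 hγr hγJ
    set g : ℝ → ℝ := fun s => fderiv ℝ J (γ s) (γ s) with hg
    have hgc : ContinuousOn g (Icc 0 1) := hφc.comp_continuousOn hγ
    have h1mem : (1 : ℝ) ∈ Icc (0:ℝ) 1 := ⟨zero_le_one, le_rfl⟩
    have hg1 : g 1 < 0 := by
      by_contra! hge
      have hv : (γ 1).1 ≠ 0 := by
        intro h0
        rw [h0, norm_zero] at hγr
        linarith
      have hvpos : 0 < ‖(γ 1).1‖ := norm_pos_iff.2 hv
      have hγm := hmu _ (hγM 1 h1mem)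
      rcases hge.eq_or_lt with heq | hlt
      · have := hNa (γ 1) ((hN _).2 ⟨hγM 1 h1mem, hv, heq.symm⟩)
        linarith
      · obtain ⟨t, ht1, ht⟩ := exists_gt_one_of_radial_pos hJC hlt
        refine hvalley _ hv (r / ‖(γ 1).1‖) t (by positivity) ((div_lt_one hvpos).2 hγr) ht1 ?_ ?_
        · have := hsph _ (hnormalize _ hv)
          rw [← hγm]
          linarith
        · have := hfib (t • γ 1)
          rw [← hγm]
          exact ht.trans_le this
    -- the last time at which the radial derivative is nonnegative
    obtain ⟨s, ⟨hs01, hgs⟩, hsmax⟩ : ∃ s, IsGreatest (Icc (0:ℝ) 1 ∩ g ⁻¹' Ici 0) s := by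
      have hcl : IsClosed (Icc (0:ℝ) 1 ∩ g ⁻¹' Ici 0) :=
        hgc.preimage_isClosed_of_isClosed isClosed_Icc isClosed_Ici
      refine (isCompact_Icc.of_isClosed_subset hcl inter_subset_left).exists_isGreatest
        ⟨0, ⟨le_rfl, zero_le_one⟩, ?_⟩
      simp [hg, hγ0]
    have hs1 : s < 1 := by
      refine lt_of_le_of_ne hs01.2 ?_
      rintro rfl
      exact absurd hgs (not_le.2 hg1)
    have hafter : ∀ t ∈ Ioo s 1, g t < 0 := by
      intro t ht
      by_contra! hge
      exact absurd (hsmax ⟨⟨hs01.1.trans ht.1.le, ht.2.le⟩, hge⟩) (not_le.2 ht.1)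
    have hsub : Ioo s 1 ⊆ Icc (0:ℝ) 1 := fun t ht => ⟨hs01.1.trans ht.1.le, ht.2.le⟩
    have hne : (𝓝[Ioo s 1] s).NeBot := by
      rw [nhdsWithin_Ioo_eq_nhdsGT hs1]; infer_instance
    have hgs0 : g s = 0 := by
      refine le_antisymm ?_ hgs
      refine le_of_tendsto ((hgc s hs01).mono hsub) ?_
      filter_upwards [self_mem_nhdsWithin] with t ht using (hafter t ht).le
    refine ⟨s, hs01, (hN _).2 ⟨hγM s hs01, fun hγs => ?_, hgs0⟩⟩
    have hγ1 : Tendsto (fun t => ‖(γ t).1‖) (𝓝[Ioo s 1] s) (𝓝 0) := by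
      have := (continuous_fst.norm.continuousAt.tendsto.comp
        ((hγ s hs01).mono hsub) :
          Tendsto (fun t => ‖(γ t).1‖) (𝓝[Ioo s 1] s) (𝓝 ‖(γ s).1‖))
      rwa [hγs, norm_zero] at this
    have hγ2 : Tendsto (fun t => 1/2 * ‖(γ t).1‖ ^ 2) (𝓝[Ioo s 1] s) (𝓝 0) := by
      simpa using (hγ1.pow 2).const_mul (1/2 : ℝ)
    obtain ⟨t, ⟨ht1, ht2⟩, ht⟩ := (((hγ1.eventually (gt_mem_nhds hr)).and
      (hγ2.eventually (gt_mem_nhds hI6))).and self_mem_nhdsWithin).exists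
    have hgt := hafter t ht
    have hγm := hmu _ (hγM t (hsub ht))
    have hv : (γ t).1 ≠ 0 := by
      intro h0
      rw [h0, hm0] at hγm
      simp [hg, hγm] at hgt
    have := hneg _ hv ht1 ht2
    rw [← hγm] at this
    exact absurd this (not_le.2 hgt)
  -- far out on each ray the reduced functional is negative, so lifting the segment from `0` to
  -- `T • v` gives an admissible path
  have hpath : ∀ v : H, v ≠ 0 → ∃ T : ℝ, 0 ≤ T ∧ r < ‖T • v‖ ∧ J (m (T • v)) < 0 := by
    intro v hv
    have hvpos : 0 < ‖v‖ := norm_pos_iff.2 hv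
    have h1 := hI7 (fun n : ℕ => (n : ℝ)) (fun n : ℕ => (n : ℝ)⁻¹ • m ((n : ℝ) • v)) v
      tendsto_natCast_atTop_atTop ?_ hv
    · have h2 : Tendsto (fun n : ℕ => (n : ℝ) * ‖v‖) atTop atTop :=
        tendsto_natCast_atTop_atTop.atTop_mul_const hvpos
      obtain ⟨n, ⟨hn1, hn2⟩, hn3⟩ := (((h1.eventually (eventually_gt_atTop (1/2 * ‖v‖ ^ 2))).and
        (h2.eventually (eventually_gt_atTop r))).and (eventually_gt_atTop 0)).exists
      have hn : (0 : ℝ) < n := Nat.cast_pos.2 hn3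
      have hnorm : ‖(n : ℝ) • v‖ = n * ‖v‖ := by rw [norm_smul, Real.norm_of_nonneg hn.le]
      refine ⟨n, hn.le, by rwa [hnorm], ?_⟩
      rw [smul_inv_smul₀ hn.ne', lt_div_iff₀ (by positivity)] at hn1
      rw [hJ, hm1, hnorm, mul_pow]
      linarith
    · refine tendsto_const_nhds.congr' ?_
      filter_upwards [eventually_gt_atTop 0] with n hn3
      have hn : (0 : ℝ) < n := Nat.cast_pos.2 hn3
      rw [Prod.smul_fst, hm1, inv_smul_smul₀ hn.ne']
  have hadm : ∀ (v : H) (T : ℝ), Continuous fun s : ℝ => m (s • T • v) := by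
    intro v T; fun_prop
  have hbddJ : ∀ γ : ℝ → H × W, ContinuousOn γ (Icc 0 1) →
      BddAbove (J '' (γ '' Icc (0:ℝ) 1)) := fun γ hγ =>
    ((isCompact_Icc.image_of_continuousOn hγ).image hJc).bddAbove
  have hNne : Nset.Nonempty := by
    have he0 : e ≠ 0 := by
      rintro rfl
      rw [norm_zero] at he
      linarith
    obtain ⟨T, -, hT1, hT2⟩ := hpath e he0
    obtain ⟨s, -, hs⟩ := hcross (fun s => m (s • T • e)) (hadm e T).continuousOn
      (fun s _ => hmM _) (by simp [hm0]) (by simpa [hm1] using hT1) (by simpa using hT2)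
    exact ⟨_, hs⟩
  have hNbdd : BddBelow (J '' Nset) := ⟨a, by rintro _ ⟨u, hu, rfl⟩; exact hNa u hu⟩
  refine ⟨?_, ⟨_, hδ, hNδ⟩, ?_⟩
  · set Γ := {c | ∃ γ : ℝ → H × W, ContinuousOn γ (Icc 0 1) ∧
      (∀ s ∈ Icc (0:ℝ) 1, γ s ∈ Mset) ∧ γ 0 = 0 ∧ r < ‖(γ 1).1‖ ∧ J (γ 1) < 0 ∧
      c = sSup (J '' (γ '' Icc (0:ℝ) 1))} with hΓ
    have hlower : ∀ c ∈ Γ, sInf (J '' Nset) ≤ c := by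
      rintro c ⟨γ, hγ, hγM, hγ0, hγr, hγJ, rfl⟩
      obtain ⟨s, hs, hsN⟩ := hcross γ hγ hγM hγ0 hγr hγJ
      exact (csInf_le hNbdd ⟨_, hsN, rfl⟩).trans
        (le_csSup (hbddJ γ hγ) ⟨_, ⟨s, hs, rfl⟩, rfl⟩)
    have hupper : ∀ u ∈ Nset, ∃ c ∈ Γ, c ≤ J u := by
      intro u hu
      obtain ⟨T, hT0, hT1, hT2⟩ := hpath u.1 ((hN u).1 hu).2.1
      refine ⟨_, ⟨fun s => m (s • T • u.1), (hadm u.1 T).continuousOn, fun s _ => hmM _,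
        by simp [hm0], by simpa [hm1] using hT1, by simpa using hT2, rfl⟩, ?_⟩
      refine csSup_le (((nonempty_Icc.2 zero_le_one).image _).image _) ?_
      rintro _ ⟨_, ⟨s, hs, rfl⟩, rfl⟩
      have := hmax u hu (s * T) (mul_nonneg hs.1 hT0)
      simpa [smul_smul] using this
    rw [hcM]
    apply le_antisymm
    · refine le_csInf (hNne.image J) ?_
      rintro _ ⟨u, hu, rfl⟩
      obtain ⟨c, hc, hcu⟩ := hupper u hu
      exact (csInf_le ⟨_, hlower⟩ hc).trans hcu
    · obtain ⟨u, hu⟩ := hNne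
      obtain ⟨c, hc, -⟩ := hupper u hu
      exact le_csInf ⟨c, hc⟩ hlower
  · have hMcl : IsClosed Mset := by
      rw [hMset, ofPred_forall]
      refine isClosed_iInter fun w => isClosed_eq ?_ continuous_const
      exact (hI.continuous_fderiv one_ne_zero).clm_apply continuous_const
    have hNeq : Nset = Mset ∩ {u | Real.sqrt (2 * a) ≤ ‖u.1‖} ∩ {u | fderiv ℝ J u u = 0} := by
      ext u
      constructor
      · intro hu
        exact ⟨⟨((hN u).1 hu).1, hNδ u hu⟩, ((hN u).1 hu).2.2⟩
      · rintro ⟨⟨h1, h2⟩, h3⟩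
        exact (hN u).2 ⟨h1, norm_pos_iff.1 (hδ.trans_le h2), h3⟩
    rw [hNeq]
    exact (hMcl.inter (isClosed_le continuous_const continuous_fst.norm)).inter
      (isClosed_eq hφc continuous_const)
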